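/- Let (P, {-,-}, s) and (Q, [-,-], s′) be Poisson superalgebras over a field K of characteristic 2. Then the tensor product P ⊗ Q is a Poisson superalgebra with: (i) the associative supercommutative product (p₁⊗q₁)(p₂⊗q₂) := (p₁p₂)⊗(q₁q₂); (ii) the Lie bracket [p₁⊗q₁, p₂⊗q₂]_⊗ := {p₁,p₂}⊗q₁q₂ + p₁p₂⊗[q₁,q₂]; (iii) the squaring s_⊗ determined on homogeneous odd tensors by s_⊗(p⊗q) := p²⊗s′(q) for p ∈ P₀, q ∈ Q₁, and s_⊗(p⊗q) := s(p)⊗q² for p ∈ P₁, q ∈ Q₀, extended to sums of odd homogeneous tensors via s_⊗(u+v) = s_⊗(u) + s_⊗(v) + [u,v]_⊗. (The grading is (P⊗Q)₀ = (P₀⊗Q₀) ⊕ (P₁⊗Q₁) and (P⊗Q)₁ = (P₀⊗Q₁) ⊕ (P₁⊗Q₀).) -/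

import Mathlib

/-!
Forgetting the grading and the squaring, a Poisson superalgebra in characteristic 2 is an ordinary
commutative Poisson algebra with an alternating bracket: polarizing the axioms on the squaring
gives `{x, x} = 0` and the Jacobi identity for all elements (`IsPoisson2.ungraded`). For such
algebras the bracket on the tensor product is checked on pure tensors (`Ungraded.tensor`).

The squaring is the only delicate point. It is constructed as the diagonal of a bilinear map.
In a homogeneous basis of `P`, the upper triangular part of the bracket, completed on the diagonal
by the squares of the odd basis vectors, is a bilinear map `γ` with `γ x y + γ y x = {x, y}` for all
`x, y` and `γ x x = s x` for odd `x` (`exists_halfBracket`). If `γ` and `δ` are such maps for `P`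
and `Q`, put `T = mul ⊗ δ + γ ⊗ mul` and `s_⊗ u = T u u`. The polarization of `s_⊗` is then the
bracket of the tensor product, and because squares of odd elements vanish, `s_⊗` has the required
values on odd pure tensors. Each remaining axiom is stable under sums by the polarization identity,
the Jacobi identity and the Leibniz rule, so it reduces to homogeneous pure tensors.
-/

/-- A Lie superalgebra over a field of characteristic 2, encoded as a predicate on the
data: a `ℤ/2`-grading given by complementary submodules `ev` and `od`, a bilinear
symmetric bracket `br` (in characteristic 2 skew-symmetry is symmetry), and a squaring
`sq : L → L` whose value is only relevant on `od`. -/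
structure IsLieSuper2 (K : Type*) [Field K] {L : Type*} [AddCommGroup L] [Module K L]
    (ev od : Submodule K L) (br : L → L → L) (sq : L → L) : Prop where
  compl : IsCompl ev od
  add_left : ∀ x y z : L, br (x + y) z = br x z + br y z
  smul_left : ∀ (c : K) (x y : L), br (c • x) y = c • br x y
  symm : ∀ x y : L, br x y = br y x
  alt_ev : ∀ x ∈ ev, br x x = 0
  grade_ee : ∀ x ∈ ev, ∀ y ∈ ev, br x y ∈ ev
  grade_eo : ∀ x ∈ ev, ∀ y ∈ od, br x y ∈ od
  grade_oo : ∀ x ∈ od, ∀ y ∈ od, br x y ∈ ev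
  jacobi_ev : ∀ x ∈ ev, ∀ y ∈ ev, ∀ z : L,
    br (br x y) z = br x (br y z) + br y (br x z)
  sq_mem : ∀ x ∈ od, sq x ∈ ev
  sq_smul : ∀ (c : K), ∀ x ∈ od, sq (c • x) = (c * c) • sq x
  sq_add : ∀ x ∈ od, ∀ y ∈ od, sq (x + y) = sq x + sq y + br x y
  sq_jacobi : ∀ x ∈ od, ∀ z : L, br (sq x) z = br x (br x z)
/-- An associative supercommutative superalgebra over a field of characteristic 2,
encoded as a predicate on the data: complementary submodules `ev`, `od` and a bilinear
associative commutative product `mul` with `a² = 0` for odd `a`. -/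
structure IsSuperComm2 (K : Type*) [Field K] {A : Type*} [AddCommGroup A] [Module K A]
    (ev od : Submodule K A) (mul : A → A → A) : Prop where
  compl : IsCompl ev od
  add_left : ∀ a b c : A, mul (a + b) c = mul a c + mul b c
  smul_left : ∀ (k : K) (a b : A), mul (k • a) b = k • mul a b
  comm : ∀ a b : A, mul a b = mul b a
  assoc : ∀ a b c : A, mul (mul a b) c = mul a (mul b c)
  alt_od : ∀ a ∈ od, mul a a = 0
  grade_ee : ∀ a ∈ ev, ∀ b ∈ ev, mul a b ∈ ev
  grade_eo : ∀ a ∈ ev, ∀ b ∈ od, mul a b ∈ od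
  grade_oo : ∀ a ∈ od, ∀ b ∈ od, mul a b ∈ ev
/-- A Poisson superalgebra in characteristic 2: a Lie superalgebra together with an
associative supercommutative product satisfying the Leibniz rule and the compatibility
of the squaring with the product. -/
structure IsPoisson2 (K : Type*) [Field K] {P : Type*} [AddCommGroup P] [Module K P]
    (ev od : Submodule K P) (mul br : P → P → P) (sq : P → P) : Prop where
  commAlg : IsSuperComm2 K ev od mul
  lieAlg : IsLieSuper2 K ev od br sq
  leibniz : ∀ x y z : P, br (mul x y) z = mul x (br y z) + mul (br x z) y
  sq_mul : ∀ x ∈ ev, ∀ y ∈ od,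
    sq (mul x y) = mul (mul x x) (sq y) + mul (mul x y) (br x y)

open TensorProduct in
/-- The bilinear operation on `P ⊗ Q` induced by bilinear operations `f` on `P` and
`g` on `Q`: on generators, `(p₁ ⊗ q₁, p₂ ⊗ q₂) ↦ f(p₁,p₂) ⊗ g(q₁,q₂)`. -/
noncomputable def tensorOp {K P Q : Type*} [Field K]
    [AddCommGroup P] [Module K P] [AddCommGroup Q] [Module K Q]
    (f : P →ₗ[K] P →ₗ[K] P) (g : Q →ₗ[K] Q →ₗ[K] Q) :
    (P ⊗[K] Q) →ₗ[K] (P ⊗[K] Q) →ₗ[K] (P ⊗[K] Q) :=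
  TensorProduct.lift
    (LinearMap.mk₂ K (fun p q => TensorProduct.map (f p) (g q))
      (fun p p' q => by simp [map_add, TensorProduct.map_add_left])
      (fun c p q => by simp [map_smul, TensorProduct.map_smul_left])
      (fun p q q' => by simp [map_add, TensorProduct.map_add_right])
      (fun p c q => by simp [map_smul, TensorProduct.map_smul_right]))

/-! ### Ungraded Poisson algebras in characteristic 2 -/

section Prelim

open TensorProduct

variable {K : Type*} [Field K]

lemma add_self_of_char_two (K : Type*) [Field K] [CharP K 2] {M : Type*} [AddCommGroup M]
    [Module K M] (x : M) : x + x = 0 := by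
  have h : (2 : K) • x = 0 := by rw [CharTwo.two_eq_zero, zero_smul]
  rwa [two_smul] at h

lemma eq_of_add_eq_zero (K : Type*) [Field K] [CharP K 2] {M : Type*} [AddCommGroup M]
    [Module K M] {x y : M} (h : x + y = 0) : x = y := by
  rw [eq_neg_of_add_eq_zero_left h, eq_comm]
  exact eq_neg_of_add_eq_zero_left (add_self_of_char_two K y)

@[simp] lemma tensorOp_tmul {P Q : Type*} [AddCommGroup P] [Module K P] [AddCommGroup Q]
    [Module K Q] (f : P →ₗ[K] P →ₗ[K] P) (g : Q →ₗ[K] Q →ₗ[K] Q) (a c : P) (b d : Q) :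
    tensorOp f g (a ⊗ₜ[K] b) (c ⊗ₜ[K] d) = f a c ⊗ₜ[K] g b d := rfl

/-- A commutative Poisson algebra in characteristic 2, without grading or squaring: a commutative
associative product and an alternating bracket satisfying the Jacobi and Leibniz identities. -/
structure Ungraded {P : Type*} [AddCommGroup P] [Module K P]
    (mul br : P →ₗ[K] P →ₗ[K] P) : Prop where
  comm : ∀ x y, mul x y = mul y x
  assoc : ∀ x y z, mul (mul x y) z = mul x (mul y z)
  symm : ∀ x y, br x y = br y x
  alt : ∀ x, br x x = 0
  jacobi : ∀ x y z, br (br x y) z = br x (br y z) + br y (br x z)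
  leibniz : ∀ x y z, br (mul x y) z = mul x (br y z) + mul (br x z) y

lemma Ungraded.left_comm {P : Type*} [AddCommGroup P] [Module K P]
    {mul br : P →ₗ[K] P →ₗ[K] P} (h : Ungraded mul br) (x y z : P) :
    mul x (mul y z) = mul y (mul x z) := by
  rw [← h.assoc, h.comm x y, h.assoc]

lemma Ungraded.mul_self_mul {P : Type*} [AddCommGroup P] [Module K P]
    {mul br : P →ₗ[K] P →ₗ[K] P} (h : Ungraded mul br) (x y : P) :
    mul (mul x y) (mul x y) = mul (mul x x) (mul y y) := by
  rw [h.assoc, h.left_comm y, ← h.assoc]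

lemma Ungraded.leibniz_right {P : Type*} [AddCommGroup P] [Module K P]
    {mul br : P →ₗ[K] P →ₗ[K] P} (h : Ungraded mul br) (x y z : P) :
    br z (mul x y) = mul x (br y z) + mul (br x z) y := by
  rw [h.symm, h.leibniz]

lemma Ungraded.br_mul_mul {P : Type*} [AddCommGroup P] [Module K P]
    {mul br : P →ₗ[K] P →ₗ[K] P} (h : Ungraded mul br) (x y z w : P) :
    br (mul x y) (mul z w) = mul (mul x z) (br y w) + mul (mul x w) (br y z) +
      mul (mul z y) (br x w) + mul (mul y w) (br x z) := by
  simp only [h.leibniz, h.leibniz_right, map_add, LinearMap.add_apply, h.assoc, h.comm,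
    h.left_comm, h.symm]
  abel

end Prelim

/-! ### The ungraded structure and its tensor product -/

section Ungraded

open TensorProduct

variable {K : Type*} [Field K] [CharP K 2]

lemma IsCompl.exists_add {R M : Type*} [Ring R] [AddCommGroup M] [Module R M]
    {A B : Submodule R M} (h : IsCompl A B) (x : M) : ∃ a ∈ A, ∃ b ∈ B, a + b = x :=
  Submodule.mem_sup.1 (h.sup_eq_top ▸ Submodule.mem_top)

/-- The polarization of `{s x, z} = {x, {x, z}}` is the Jacobi identity for two odd elements, and
the polarization of `s` at `(x, x)` is `{x, x} = 0`. -/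
lemma IsPoisson2.ungraded {P : Type*} [AddCommGroup P] [Module K P]
    {ev od : Submodule K P} {mul br : P →ₗ[K] P →ₗ[K] P} {sq : P → P}
    (h : IsPoisson2 K ev od (fun x y => mul x y) (fun x y => br x y) sq) :
    Ungraded mul br := by
  have hs : ∀ x y, br x y = br y x := h.lieAlg.symm
  have hodd : ∀ x ∈ od, br x x = 0 := by
    intro x hx
    have h1 := h.lieAlg.sq_add x hx x hx
    have h0 : sq 0 = 0 := by simpa using h.lieAlg.sq_smul 0 x hx
    rw [add_self_of_char_two K, h0, add_self_of_char_two K, zero_add] at h1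
    exact h1.symm
  have hoo : ∀ x ∈ od, ∀ y ∈ od, ∀ z, br (br x y) z = br x (br y z) + br y (br x z) := by
    intro x hx y hy z
    have h1 := h.lieAlg.sq_jacobi (x + y) (od.add_mem hx hy) z
    have h2 := h.lieAlg.sq_jacobi x hx z
    have h3 := h.lieAlg.sq_jacobi y hy z
    rw [h.lieAlg.sq_add x hx y hy] at h1
    simp only [map_add, LinearMap.add_apply, h2, h3] at h1
    have : br (br x y) z - (br x (br y z) + br y (br x z)) = 0 := by
      linear_combination (norm := abel) h1
    exact sub_eq_zero.1 this
  have hee : ∀ x ∈ ev, ∀ y ∈ ev, ∀ z, br (br x y) z = br x (br y z) + br y (br x z) :=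
    h.lieAlg.jacobi_ev
  -- In characteristic 2 the Jacobi identity is symmetric in its three arguments, so the mixed
  -- case follows from the case in which the two arguments of equal parity come first.
  have heo : ∀ x ∈ ev, ∀ y ∈ od, ∀ z, br (br x y) z = br x (br y z) + br y (br x z) := by
    intro x hx y hy z
    obtain ⟨a, ha, b, hb, rfl⟩ := h.lieAlg.compl.exists_add z
    have h1 := hee x hx a ha y
    have h2 := hoo y hy b hb x
    apply eq_of_add_eq_zero K
    simp only [map_add]
    rw [hs (br x y) a, hs (br x y) b, hs y (br x a), h1, hs x (br y b), h2, hs y a, hs b x, hs x y]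
    have e1 := add_self_of_char_two K (br x (br a y))
    have e2 := add_self_of_char_two K (br a (br y x))
    have e3 := add_self_of_char_two K (br y (br x b))
    have e4 := add_self_of_char_two K (br b (br y x))
    linear_combination (norm := abel) e1 + e2 + e3 + e4
  refine ⟨h.commAlg.comm, h.commAlg.assoc, hs, fun x => ?_, fun x y z => ?_, h.leibniz⟩
  · obtain ⟨a, ha, b, hb, rfl⟩ := h.lieAlg.compl.exists_add x
    have ha' : br a a = 0 := h.lieAlg.alt_ev a ha
    simp [ha', hodd b hb, hs b a, add_self_of_char_two K]
  · obtain ⟨a, ha, b, hb, rfl⟩ := h.lieAlg.compl.exists_add x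
    obtain ⟨c, hc, d, hd, rfl⟩ := h.lieAlg.compl.exists_add y
    have hoe := heo c hc b hb z
    rw [hs c b] at hoe
    simp only [map_add, LinearMap.add_apply, hee a ha c hc, hoo b hb d hd, heo a ha d hd, hoe]
    abel

/-- The tensor product of ungraded Poisson algebras. -/
lemma Ungraded.tensor {P Q : Type*} [AddCommGroup P] [Module K P] [AddCommGroup Q] [Module K Q]
    {mulP brP : P →ₗ[K] P →ₗ[K] P} {mulQ brQ : Q →ₗ[K] Q →ₗ[K] Q}
    (hP : Ungraded mulP brP) (hQ : Ungraded mulQ brQ) :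
    Ungraded (tensorOp mulP mulQ) (tensorOp brP mulQ + tensorOp mulP brQ) := by
  obtain ⟨M, hM⟩ : ∃ M, M = tensorOp mulP mulQ := ⟨_, rfl⟩
  obtain ⟨B, hB⟩ : ∃ B, B = tensorOp brP mulQ + tensorOp mulP brQ := ⟨_, rfl⟩
  have Mt : ∀ a b c d, M (a ⊗ₜ b) (c ⊗ₜ d) = mulP a c ⊗ₜ mulQ b d := fun _ _ _ _ => by
    rw [hM, tensorOp_tmul]
  have Bt : ∀ a b c d, B (a ⊗ₜ b) (c ⊗ₜ d) = brP a c ⊗ₜ mulQ b d + mulP a c ⊗ₜ brQ b d :=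
    fun _ _ _ _ => by rw [hB, LinearMap.add_apply, LinearMap.add_apply, tensorOp_tmul,
      tensorOp_tmul]
  rw [← hM, ← hB]
  have hsymm : ∀ u v, B u v = B v u := by
    have : B = B.flip := TensorProduct.ext' fun a b => TensorProduct.ext' fun c d => by
      rw [LinearMap.flip_apply, Bt, Bt, hP.comm a c, hP.symm a c, hQ.comm b d, hQ.symm b d]
    exact fun u v => LinearMap.congr_fun₂ this u v
  have hcomm : ∀ u v, M u v = M v u := by
    have : M = M.flip := TensorProduct.ext' fun a b => TensorProduct.ext' fun c d => by
      rw [LinearMap.flip_apply, Mt, Mt, hP.comm a c, hQ.comm b d]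
    exact fun u v => LinearMap.congr_fun₂ this u v
  refine ⟨hcomm, fun u v w => ?_, hsymm, fun u => ?_, fun u v w => ?_, fun u v w => ?_⟩
  · induction u using TensorProduct.induction_on with
    | zero => simp
    | add u u' hu hu' => simp only [map_add, LinearMap.add_apply, hu, hu']
    | tmul a b =>
      induction v using TensorProduct.induction_on with
      | zero => simp
      | add v v' hv hv' => simp only [map_add, LinearMap.add_apply, hv, hv']
      | tmul c d =>
        induction w using TensorProduct.induction_on with
        | zero => simp
        | add w w' hw hw' => simp only [map_add, hw, hw']
        | tmul e f => simp only [Mt, hP.assoc, hQ.assoc]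
  · induction u using TensorProduct.induction_on with
    | zero => simp
    | add u v hu hv =>
      simp only [map_add, LinearMap.add_apply, hu, hv, hsymm v u, zero_add, add_zero]
      exact add_self_of_char_two K _
    | tmul a b => simp [Bt, hP.alt, hQ.alt]
  · induction u using TensorProduct.induction_on with
    | zero => simp
    | add u u' hu hu' =>
      simp only [map_add, LinearMap.add_apply, hu, hu']
      abel
    | tmul a b =>
      induction v using TensorProduct.induction_on with
      | zero => simp
      | add v v' hv hv' =>
        simp only [map_add, LinearMap.add_apply, hv, hv']
        abel
      | tmul c d =>
        induction w using TensorProduct.induction_on with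
        | zero => simp
        | add w w' hw hw' =>
          simp only [map_add, hw, hw']
          abel
        | tmul e f =>
          -- Expanded into monomials, the two sides contain every term an even number of times.
          apply eq_of_add_eq_zero K
          have h2 : ∀ x : P ⊗[K] Q, (2 : ℤ) • x = 0 := fun x => by
            rw [two_zsmul, add_self_of_char_two K]
          simp only [Bt, map_add, LinearMap.add_apply, hP.jacobi a c e, hQ.jacobi b d f,
            hP.leibniz, hQ.leibniz, hP.leibniz_right, hQ.leibniz_right,
            TensorProduct.tmul_add, TensorProduct.add_tmul,
            hP.assoc, hQ.assoc, hP.symm, hQ.symm, hP.comm, hQ.comm, hP.left_comm, hQ.left_comm]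
          abel_nf
          simp only [h2, add_zero]
  · induction u using TensorProduct.induction_on with
    | zero => simp
    | add u u' hu hu' => simp only [map_add, LinearMap.add_apply, hu, hu']; abel
    | tmul a b =>
      induction v using TensorProduct.induction_on with
      | zero => simp
      | add v v' hv hv' => simp only [map_add, LinearMap.add_apply, hv, hv']; abel
      | tmul c d =>
        induction w using TensorProduct.induction_on with
        | zero => simp
        | add w w' hw hw' => simp only [map_add, LinearMap.add_apply, hw, hw']; abel
        | tmul e f =>
          simp only [Mt, Bt, map_add, LinearMap.add_apply, hP.leibniz, hQ.leibniz,
            TensorProduct.tmul_add, TensorProduct.add_tmul,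
            hP.assoc, hQ.assoc, hP.comm, hQ.comm]
          abel

/-- The identity `{s u, w} = {u, {u, w}}` for `u = p ⊗ q` with `q` odd, so that `s u = p² ⊗ s q`. -/
lemma sq_jacobi_tmul_left {P Q : Type*} [AddCommGroup P] [Module K P] [AddCommGroup Q] [Module K Q]
    {mulP brP : P →ₗ[K] P →ₗ[K] P} {mulQ brQ : Q →ₗ[K] Q →ₗ[K] Q}
    (hP : Ungraded mulP brP) (hQ : Ungraded mulQ brQ) {p : P} {q s : Q} (hq : mulQ q q = 0)
    (hs : ∀ z, brQ s z = brQ q (brQ q z)) (w : P ⊗[K] Q) :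
    (tensorOp brP mulQ + tensorOp mulP brQ) (mulP p p ⊗ₜ s) w =
      (tensorOp brP mulQ + tensorOp mulP brQ) (p ⊗ₜ q)
        ((tensorOp brP mulQ + tensorOp mulP brQ) (p ⊗ₜ q) w) := by
  have hq' : ∀ z, mulQ q (mulQ q z) = 0 := fun z => by simp [← hQ.assoc, hq]
  have hb : ∀ z, brP (mulP p p) z = 0 := fun z => by
    rw [hP.leibniz, hP.comm p, add_self_of_char_two K]
  induction w using TensorProduct.induction_on with
  | zero => simp
  | add w w' hw hw' => simp only [map_add] at hw hw' ⊢; rw [hw, hw']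
  | tmul a b =>
    have e1 : brQ q (mulQ q b) = mulQ q (brQ q b) := by
      rw [hQ.leibniz_right, hQ.alt, hQ.symm b]; simp
    have e2 : brP p (mulP p a) = mulP p (brP p a) := by
      rw [hP.leibniz_right, hP.alt, hP.symm a]; simp
    simp only [LinearMap.add_apply, tensorOp_tmul, map_add, hb, hs, hq', e1, e2,
      TensorProduct.zero_tmul, TensorProduct.tmul_zero, zero_add, hP.assoc]
    rw [← add_assoc, add_self_of_char_two K, zero_add]

/-- The identity `{s u, w} = {u, {u, w}}` for `u = p ⊗ q` with `p` odd, so that `s u = s p ⊗ q²`. -/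
lemma sq_jacobi_tmul_right {P Q : Type*} [AddCommGroup P] [Module K P] [AddCommGroup Q]
    [Module K Q] {mulP brP : P →ₗ[K] P →ₗ[K] P} {mulQ brQ : Q →ₗ[K] Q →ₗ[K] Q}
    (hP : Ungraded mulP brP) (hQ : Ungraded mulQ brQ) {p s : P} {q : Q} (hp : mulP p p = 0)
    (hs : ∀ z, brP s z = brP p (brP p z)) (w : P ⊗[K] Q) :
    (tensorOp brP mulQ + tensorOp mulP brQ) (s ⊗ₜ mulQ q q) w =
      (tensorOp brP mulQ + tensorOp mulP brQ) (p ⊗ₜ q)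
        ((tensorOp brP mulQ + tensorOp mulP brQ) (p ⊗ₜ q) w) := by
  have hp' : ∀ z, mulP p (mulP p z) = 0 := fun z => by simp [← hP.assoc, hp]
  have hb : ∀ z, brQ (mulQ q q) z = 0 := fun z => by
    rw [hQ.leibniz, hQ.comm q, add_self_of_char_two K]
  induction w using TensorProduct.induction_on with
  | zero => simp
  | add w w' hw hw' => simp only [map_add] at hw hw' ⊢; rw [hw, hw']
  | tmul a b =>
    have e1 : brQ q (mulQ q b) = mulQ q (brQ q b) := by
      rw [hQ.leibniz_right, hQ.alt, hQ.symm b]; simp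
    have e2 : brP p (mulP p a) = mulP p (brP p a) := by
      rw [hP.leibniz_right, hP.alt, hP.symm a]; simp
    simp only [LinearMap.add_apply, tensorOp_tmul, map_add, hb, hs, hp', e1, e2,
      TensorProduct.zero_tmul, TensorProduct.tmul_zero, add_zero, hQ.assoc]
    rw [add_assoc, add_self_of_char_two K, add_zero]

end Ungraded

/-! ### The squaring as a diagonal -/

section HalfBracket

variable {K : Type*} [Field K] [CharP K 2]

/-- The bracket is the symmetrization of a bilinear map `γ` whose diagonal restricts to the squaring
on the odd part. -/
lemma exists_halfBracket {P : Type*} [AddCommGroup P] [Module K P]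
    {ev od : Submodule K P} {mul br : P →ₗ[K] P →ₗ[K] P} {sq : P → P}
    (h : IsPoisson2 K ev od (fun x y => mul x y) (fun x y => br x y) sq) :
    ∃ γ : P →ₗ[K] P →ₗ[K] P, (∀ x y, γ x y + γ y x = br x y) ∧ ∀ x ∈ od, γ x x = sq x := by
  classical
  have hU := h.ungraded
  -- `b` is a homogeneous basis of `P`; its odd members are the vectors of `bo`.
  let bo := Module.Basis.ofVectorSpace K od
  let b := ((Module.Basis.ofVectorSpace K ev).prod bo).map
    (Submodule.prodEquivOfIsCompl ev od h.lieAlg.compl)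
  have hb : ∀ j, b (Sum.inr j) = (bo j : P) := fun j => by simp [b]
  let lin := linearOrderOfSTO (WellOrderingRel (α := Module.Basis.ofVectorSpaceIndex K ev ⊕
    Module.Basis.ofVectorSpaceIndex K od))
  let c : Module.Basis.ofVectorSpaceIndex K ev ⊕ Module.Basis.ofVectorSpaceIndex K od → P :=
    Sum.elim (fun _ => 0) (fun j => sq (bo j))
  let γ : P →ₗ[K] P →ₗ[K] P := b.constr K fun i => b.constr K fun j =>
    if i < j then br (b i) (b j) else if i = j then c i else 0
  have hγ : ∀ i j, γ (b i) (b j) =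
      if i < j then br (b i) (b j) else if i = j then c i else 0 := fun i j => by
    simp only [γ, Module.Basis.constr_basis]
  have hpol : ∀ x y, γ x y + γ y x = br x y := by
    have : γ + γ.flip = br := by
      refine b.ext fun i => b.ext fun j => ?_
      simp only [LinearMap.add_apply, LinearMap.flip_apply, hγ]
      rcases lt_trichotomy i j with hij | rfl | hij
      · simp [hij, hij.not_gt, hij.ne']
      · simp [hU.alt, add_self_of_char_two K]
      · simp [hij, hij.not_gt, hij.ne', hU.symm (b i)]
    exact fun x y => by rw [← this]; rfl
  refine ⟨γ, hpol, fun x hx => ?_⟩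
  -- Both sides are quadratic on `od` with the same polarization, and they agree on a basis.
  suffices H : ∀ y : od, γ y y = sq y from H ⟨x, hx⟩
  intro y
  have hy : y ∈ Submodule.span K (Set.range bo) := bo.span_eq ▸ Submodule.mem_top
  induction hy using Submodule.span_induction with
  | mem y hy =>
    obtain ⟨j, rfl⟩ := hy
    rw [← hb, hγ]
    simp [c, hb]
  | zero => simpa using (h.lieAlg.sq_smul 0 0 od.zero_mem).symm
  | add y z _ _ ihy ihz =>
    have h1 := h.lieAlg.sq_add y y.2 z z.2
    rw [Submodule.coe_add, h1, ← ihy, ← ihz, ← hpol]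
    simp only [map_add, LinearMap.add_apply]
    abel
  | smul k y _ ih =>
    rw [Submodule.coe_smul, h.lieAlg.sq_smul k y y.2, ← ih]
    simp [mul_smul]

end HalfBracket

/-! ### The grading of the tensor product -/

section Grading

open TensorProduct

variable {K : Type*} [Field K] {P Q : Type*} [AddCommGroup P] [Module K P]
  [AddCommGroup Q] [Module K Q]

/-- The subspace `A ⊗ B + C ⊗ D` of `P ⊗ Q`, where `A, C ≤ P` and `B, D ≤ Q`. With `A, B, C, D`
the homogeneous parts of `P` and `Q` it gives both parts of the grading of `P ⊗ Q`. -/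
abbrev part (A : Submodule K P) (B : Submodule K Q) (C : Submodule K P) (D : Submodule K Q) :
    Submodule K (P ⊗[K] Q) :=
  LinearMap.range (TensorProduct.map A.subtype B.subtype) ⊔
    LinearMap.range (TensorProduct.map C.subtype D.subtype)

variable {A C : Submodule K P} {B D : Submodule K Q}

lemma tmul_mem_left {p : P} {q : Q} (hp : p ∈ A) (hq : q ∈ B) : p ⊗ₜ[K] q ∈ part A B C D :=
  Submodule.mem_sup_left ⟨⟨p, hp⟩ ⊗ₜ ⟨q, hq⟩, rfl⟩

lemma tmul_mem_right {p : P} {q : Q} (hp : p ∈ C) (hq : q ∈ D) : p ⊗ₜ[K] q ∈ part A B C D :=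
  Submodule.mem_sup_right ⟨⟨p, hp⟩ ⊗ₜ ⟨q, hq⟩, rfl⟩

/-- Induction on pure tensors. No clause for scalars is needed, since a scalar is absorbed
in a factor of a pure tensor. -/
lemma part_induction {motive : P ⊗[K] Q → Prop} (zero : motive 0)
    (left : ∀ p ∈ A, ∀ q ∈ B, motive (p ⊗ₜ q)) (right : ∀ p ∈ C, ∀ q ∈ D, motive (p ⊗ₜ q))
    (add : ∀ u ∈ part A B C D, ∀ v ∈ part A B C D, motive u → motive v → motive (u + v))
    {u : P ⊗[K] Q} (hu : u ∈ part A B C D) : motive u := by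
  have key : ∀ (E : Submodule K P) (F : Submodule K Q),
      (∀ p ∈ E, ∀ q ∈ F, p ⊗ₜ[K] q ∈ part A B C D ∧ motive (p ⊗ₜ q)) → ∀ t : E ⊗[K] F,
      TensorProduct.map E.subtype F.subtype t ∈ part A B C D ∧
        motive (TensorProduct.map E.subtype F.subtype t) := by
    intro E F hEF t
    induction t using TensorProduct.induction_on with
    | zero => simpa using zero
    | tmul p q => exact hEF p p.2 q q.2
    | add s t hs ht =>
      rw [map_add]
      exact ⟨add_mem hs.1 ht.1, add _ hs.1 _ ht.1 hs.2 ht.2⟩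
  obtain ⟨_, ⟨s, rfl⟩, _, ⟨t, rfl⟩, rfl⟩ := Submodule.mem_sup.1 hu
  have hs := key A B (fun p hp q hq => ⟨tmul_mem_left hp hq, left p hp q hq⟩) s
  have ht := key C D (fun p hp q hq => ⟨tmul_mem_right hp hq, right p hp q hq⟩) t
  exact add _ hs.1 _ ht.1 hs.2 ht.2

/-- A bilinear condition on `A ⊗ B + C ⊗ D` and `A' ⊗ B' + C' ⊗ D'` can be checked on
pure tensors. -/
lemma part_map_mem {A' C' : Submodule K P} {B' D' : Submodule K Q} {S : Submodule K (P ⊗[K] Q)}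
    (f : P ⊗[K] Q →ₗ[K] P ⊗[K] Q →ₗ[K] P ⊗[K] Q)
    (h₁ : ∀ p ∈ A, ∀ q ∈ B, ∀ p' ∈ A', ∀ q' ∈ B', f (p ⊗ₜ q) (p' ⊗ₜ q') ∈ S)
    (h₂ : ∀ p ∈ A, ∀ q ∈ B, ∀ p' ∈ C', ∀ q' ∈ D', f (p ⊗ₜ q) (p' ⊗ₜ q') ∈ S)
    (h₃ : ∀ p ∈ C, ∀ q ∈ D, ∀ p' ∈ A', ∀ q' ∈ B', f (p ⊗ₜ q) (p' ⊗ₜ q') ∈ S)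
    (h₄ : ∀ p ∈ C, ∀ q ∈ D, ∀ p' ∈ C', ∀ q' ∈ D', f (p ⊗ₜ q) (p' ⊗ₜ q') ∈ S) :
    ∀ u ∈ part A B C D, ∀ v ∈ part A' B' C' D', f u v ∈ S := by
  intro u hu v hv
  refine part_induction (motive := fun u => f u v ∈ S) (by simp) (fun p hp q hq => ?_)
    (fun p hp q hq => ?_) (fun u _ u' _ h h' => ?_) hu
  · exact part_induction (motive := fun v => f (p ⊗ₜ q) v ∈ S) (by simp) (h₁ p hp q hq)
      (h₂ p hp q hq) (fun v _ v' _ h h' => by rw [map_add]; exact add_mem h h') hv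
  · exact part_induction (motive := fun v => f (p ⊗ₜ q) v ∈ S) (by simp) (h₃ p hp q hq)
      (h₄ p hp q hq) (fun v _ v' _ h h' => by rw [map_add]; exact add_mem h h') hv
  · rw [map_add]
    exact add_mem h h'

lemma projection_of_mem_left {V : Type*} [AddCommGroup V] [Module K V] {X Y : Submodule K V}
    (h : IsCompl X Y) (x : V) (hx : x ∈ X) : X.projection Y h x = x :=
  Submodule.projection_apply_left h ⟨x, hx⟩

lemma projection_of_mem_right {V : Type*} [AddCommGroup V] [Module K V] {X Y : Submodule K V}
    (h : IsCompl X Y) (y : V) (hy : y ∈ Y) : X.projection Y h y = 0 :=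
  Submodule.projection_apply_right h ⟨y, hy⟩

lemma isCompl_part (hP : IsCompl A C) (hQ : IsCompl B D) :
    IsCompl (part A B C D) (part A D C B) := by
  -- `E` is the projection onto the first part along the second.
  let E : P ⊗[K] Q →ₗ[K] P ⊗[K] Q :=
    TensorProduct.map (A.projection C hP) (B.projection D hQ) +
      TensorProduct.map (C.projection A hP.symm) (D.projection B hQ.symm)
  have h1 : ∀ u ∈ part A B C D, E u = u := fun u hu =>
    part_induction (motive := fun u => E u = u) (by simp)
      (fun p hp q hq => by
          simp [E, projection_of_mem_left hP p hp, projection_of_mem_left hQ q hq,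
            projection_of_mem_right hP.symm p hp])
      (fun p hp q hq => by
          simp [E, projection_of_mem_right hP p hp, projection_of_mem_left hP.symm p hp,
            projection_of_mem_left hQ.symm q hq])
      (fun u _ v _ h h' => by rw [map_add, h, h']) hu
  have h2 : ∀ u ∈ part A D C B, E u = 0 := fun u hu =>
    part_induction (motive := fun u => E u = 0) (by simp)
      (fun p hp q hq => by
          simp [E, projection_of_mem_right hQ q hq, projection_of_mem_right hP.symm p hp])
      (fun p hp q hq => by
          simp [E, projection_of_mem_right hP p hp, projection_of_mem_right hQ.symm q hq])
      (fun u _ v _ h h' => by rw [map_add, h, h', add_zero]) hu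
  constructor
  · rw [Submodule.disjoint_def]
    exact fun u hu hu' => (h1 u hu).symm.trans (h2 u hu')
  · rw [codisjoint_iff, eq_top_iff]
    rintro u -
    induction u using TensorProduct.induction_on with
    | zero => exact zero_mem _
    | add u v hu hv => exact add_mem hu hv
    | tmul p q =>
      obtain ⟨a, ha, c, hc, rfl⟩ := hP.exists_add p
      obtain ⟨b, hb, d, hd, rfl⟩ := hQ.exists_add q
      simp only [TensorProduct.add_tmul, TensorProduct.tmul_add]
      exact add_mem
        (add_mem (Submodule.mem_sup_left (tmul_mem_left ha hb))
          (Submodule.mem_sup_right (tmul_mem_right hc hb)))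
        (add_mem (Submodule.mem_sup_right (tmul_mem_left ha hd))
          (Submodule.mem_sup_left (tmul_mem_right hc hd)))

end Grading

/-! ### The Poisson superalgebra structure -/

open TensorProduct in
/-- The tensor product of two Poisson superalgebras in
characteristic 2 is a Poisson superalgebra, with product
`(p₁⊗q₁)(p₂⊗q₂) = p₁p₂ ⊗ q₁q₂`, bracket
`[p₁⊗q₁, p₂⊗q₂] = {p₁,p₂} ⊗ q₁q₂ + p₁p₂ ⊗ [q₁,q₂]`, and a squaring determined on
homogeneous odd tensors by `s(p⊗q) = p² ⊗ s'(q)` (`p` even, `q` odd) and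
`s(p⊗q) = s(p) ⊗ q²` (`p` odd, `q` even), extended to sums of odd elements by
`s(u+v) = s(u) + s(v) + [u,v]`. -/
theorem tensor_product_isPoisson
    {K P Q : Type*} [Field K] [CharP K 2]
    [AddCommGroup P] [Module K P] [AddCommGroup Q] [Module K Q]
    (evP odP : Submodule K P) (mulP brP : P →ₗ[K] P →ₗ[K] P) (sqP : P → P)
    (evQ odQ : Submodule K Q) (mulQ brQ : Q →ₗ[K] Q →ₗ[K] Q) (sqQ : Q → Q)
    (hP : IsPoisson2 K evP odP (fun x y => mulP x y) (fun x y => brP x y) sqP)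
    (hQ : IsPoisson2 K evQ odQ (fun x y => mulQ x y) (fun x y => brQ x y) sqQ) :
    ∃ sT : P ⊗[K] Q → P ⊗[K] Q,
      (∀ p ∈ evP, ∀ q ∈ odQ, sT (p ⊗ₜ[K] q) = (mulP p p) ⊗ₜ[K] (sqQ q)) ∧
      (∀ p ∈ odP, ∀ q ∈ evQ, sT (p ⊗ₜ[K] q) = (sqP p) ⊗ₜ[K] (mulQ q q)) ∧
      (∀ u v : P ⊗[K] Q,
        u ∈ (LinearMap.range (TensorProduct.map evP.subtype odQ.subtype) ⊔
             LinearMap.range (TensorProduct.map odP.subtype evQ.subtype)) →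
        v ∈ (LinearMap.range (TensorProduct.map evP.subtype odQ.subtype) ⊔
             LinearMap.range (TensorProduct.map odP.subtype evQ.subtype)) →
        sT (u + v) = sT u + sT v +
          (tensorOp brP mulQ u v + tensorOp mulP brQ u v)) ∧
      IsPoisson2 K
        (LinearMap.range (TensorProduct.map evP.subtype evQ.subtype) ⊔
         LinearMap.range (TensorProduct.map odP.subtype odQ.subtype))
        (LinearMap.range (TensorProduct.map evP.subtype odQ.subtype) ⊔
         LinearMap.range (TensorProduct.map odP.subtype evQ.subtype))
        (fun u v => tensorOp mulP mulQ u v)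
        (fun u v => tensorOp brP mulQ u v + tensorOp mulP brQ u v)
        sT := by
  have uP := hP.ungraded
  have uQ := hQ.ungraded
  have uT := uP.tensor uQ
  obtain ⟨γP, hγP, hγP'⟩ := exists_halfBracket hP
  obtain ⟨γQ, hγQ, hγQ'⟩ := exists_halfBracket hQ
  have aP : ∀ p ∈ odP, mulP p p = 0 := hP.commAlg.alt_od
  have aQ : ∀ q ∈ odQ, mulQ q q = 0 := hQ.commAlg.alt_od
  obtain ⟨M, hM⟩ : ∃ M, M = tensorOp mulP mulQ := ⟨_, rfl⟩
  obtain ⟨B, hB⟩ : ∃ B, B = tensorOp brP mulQ + tensorOp mulP brQ := ⟨_, rfl⟩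
  obtain ⟨T, hT⟩ : ∃ T, T = tensorOp γP mulQ + tensorOp mulP γQ := ⟨_, rfl⟩
  rw [← hM, ← hB] at uT
  have Bt : ∀ a b c d, B (a ⊗ₜ b) (c ⊗ₜ d) = brP a c ⊗ₜ mulQ b d + mulP a c ⊗ₜ brQ b d :=
    fun _ _ _ _ => by rw [hB]; rfl
  have Mt : ∀ a b c d, M (a ⊗ₜ b) (c ⊗ₜ d) = mulP a c ⊗ₜ mulQ b d := fun _ _ _ _ => by
    rw [hM]; rfl
  -- The bracket is the symmetrization of `T`.
  have hTB : ∀ u v, T u v + T v u = B u v := by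
    have : T + T.flip = B := by
      refine TensorProduct.ext' fun a b => TensorProduct.ext' fun c d => ?_
      simp only [hT, LinearMap.add_apply, LinearMap.flip_apply, tensorOp_tmul, Bt, ← hγP, ← hγQ,
        TensorProduct.add_tmul, TensorProduct.tmul_add, uP.comm c a, uQ.comm d b]
      abel
    exact fun u v => by rw [← this]; rfl
  have sEO : ∀ p ∈ evP, ∀ q ∈ odQ, T (p ⊗ₜ q) (p ⊗ₜ q) = mulP p p ⊗ₜ sqQ q := fun p _ q hq => by
    simp [hT, aQ q hq, hγQ' q hq]
  have sOE : ∀ p ∈ odP, ∀ q ∈ evQ, T (p ⊗ₜ q) (p ⊗ₜ q) = sqP p ⊗ₜ mulQ q q := fun p hp q _ => by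
    simp [hT, aP p hp, hγP' p hp]
  have sadd : ∀ u v, T (u + v) (u + v) = T u u + T v v + B u v := fun u v => by
    rw [← hTB]
    simp only [map_add, LinearMap.add_apply]
    abel
  -- Closure of the homogeneous parts of `P` and `Q` under the operations, in either order.
  have mP1 : ∀ x ∈ evP, ∀ y ∈ evP, mulP x y ∈ evP := hP.commAlg.grade_ee
  have mP2 : ∀ x ∈ evP, ∀ y ∈ odP, mulP x y ∈ odP := hP.commAlg.grade_eo
  have mP3 : ∀ x ∈ odP, ∀ y ∈ evP, mulP x y ∈ odP := fun x hx y hy => uP.comm y x ▸ mP2 y hy x hx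
  have mP4 : ∀ x ∈ odP, ∀ y ∈ odP, mulP x y ∈ evP := hP.commAlg.grade_oo
  have bP1 : ∀ x ∈ evP, ∀ y ∈ evP, brP x y ∈ evP := hP.lieAlg.grade_ee
  have bP2 : ∀ x ∈ evP, ∀ y ∈ odP, brP x y ∈ odP := hP.lieAlg.grade_eo
  have bP3 : ∀ x ∈ odP, ∀ y ∈ evP, brP x y ∈ odP := fun x hx y hy => uP.symm y x ▸ bP2 y hy x hx
  have bP4 : ∀ x ∈ odP, ∀ y ∈ odP, brP x y ∈ evP := hP.lieAlg.grade_oo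
  have mQ1 : ∀ x ∈ evQ, ∀ y ∈ evQ, mulQ x y ∈ evQ := hQ.commAlg.grade_ee
  have mQ2 : ∀ x ∈ evQ, ∀ y ∈ odQ, mulQ x y ∈ odQ := hQ.commAlg.grade_eo
  have mQ3 : ∀ x ∈ odQ, ∀ y ∈ evQ, mulQ x y ∈ odQ := fun x hx y hy => uQ.comm y x ▸ mQ2 y hy x hx
  have mQ4 : ∀ x ∈ odQ, ∀ y ∈ odQ, mulQ x y ∈ evQ := hQ.commAlg.grade_oo
  have bQ1 : ∀ x ∈ evQ, ∀ y ∈ evQ, brQ x y ∈ evQ := hQ.lieAlg.grade_ee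
  have bQ2 : ∀ x ∈ evQ, ∀ y ∈ odQ, brQ x y ∈ odQ := hQ.lieAlg.grade_eo
  have bQ3 : ∀ x ∈ odQ, ∀ y ∈ evQ, brQ x y ∈ odQ := fun x hx y hy => uQ.symm y x ▸ bQ2 y hy x hx
  have bQ4 : ∀ x ∈ odQ, ∀ y ∈ odQ, brQ x y ∈ evQ := hQ.lieAlg.grade_oo
  have hcompl := isCompl_part hP.commAlg.compl hQ.commAlg.compl
  have Mee : ∀ u ∈ part evP evQ odP odQ, ∀ v ∈ part evP evQ odP odQ,
      M u v ∈ part evP evQ odP odQ := by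
    apply part_map_mem <;> intro p hp q hq p' hp' q' hq' <;> rw [Mt] <;>
    first
    | exact tmul_mem_left (by simp only [*]) (by simp only [*])
    | exact tmul_mem_right (by simp only [*]) (by simp only [*])
  have Meo : ∀ u ∈ part evP evQ odP odQ, ∀ v ∈ part evP odQ odP evQ,
      M u v ∈ part evP odQ odP evQ := by
    apply part_map_mem <;> intro p hp q hq p' hp' q' hq' <;> rw [Mt] <;>
    first
    | exact tmul_mem_left (by simp only [*]) (by simp only [*])
    | exact tmul_mem_right (by simp only [*]) (by simp only [*])
  have Moo : ∀ u ∈ part evP odQ odP evQ, ∀ v ∈ part evP odQ odP evQ,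
      M u v ∈ part evP evQ odP odQ := by
    apply part_map_mem <;> intro p hp q hq p' hp' q' hq' <;> rw [Mt] <;>
    first
    | exact tmul_mem_left (by simp only [*]) (by simp only [*])
    | exact tmul_mem_right (by simp only [*]) (by simp only [*])
  have Bee : ∀ u ∈ part evP evQ odP odQ, ∀ v ∈ part evP evQ odP odQ,
      B u v ∈ part evP evQ odP odQ := by
    apply part_map_mem <;> intro p hp q hq p' hp' q' hq' <;> rw [Bt] <;> apply add_mem <;>
    first
    | exact tmul_mem_left (by simp only [*]) (by simp only [*])
    | exact tmul_mem_right (by simp only [*]) (by simp only [*])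
  have Beo : ∀ u ∈ part evP evQ odP odQ, ∀ v ∈ part evP odQ odP evQ,
      B u v ∈ part evP odQ odP evQ := by
    apply part_map_mem <;> intro p hp q hq p' hp' q' hq' <;> rw [Bt] <;> apply add_mem <;>
    first
    | exact tmul_mem_left (by simp only [*]) (by simp only [*])
    | exact tmul_mem_right (by simp only [*]) (by simp only [*])
  have Boo : ∀ u ∈ part evP odQ odP evQ, ∀ v ∈ part evP odQ odP evQ,
      B u v ∈ part evP evQ odP odQ := by
    apply part_map_mem <;> intro p hp q hq p' hp' q' hq' <;> rw [Bt] <;> apply add_mem <;>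
    first
    | exact tmul_mem_left (by simp only [*]) (by simp only [*])
    | exact tmul_mem_right (by simp only [*]) (by simp only [*])
  have Mod : ∀ u ∈ part evP odQ odP evQ, M u u = 0 := fun u hu =>
    part_induction (motive := fun u => M u u = 0) (by simp)
      (fun p hp q hq => by rw [Mt, aQ q hq, TensorProduct.tmul_zero])
      (fun p hp q hq => by rw [Mt, aP p hp, TensorProduct.zero_tmul])
      (fun u _ v _ h h' => by
        simp only [map_add, LinearMap.add_apply, h, h', uT.comm v u, zero_add, add_zero]
        exact add_self_of_char_two K _) hu
  have smem : ∀ u ∈ part evP odQ odP evQ, T u u ∈ part evP evQ odP odQ := fun u hu =>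
    part_induction (motive := fun u => T u u ∈ part evP evQ odP odQ) (by simp)
      (fun p hp q hq => by
        rw [sEO p hp q hq]; exact tmul_mem_left (mP1 p hp p hp) (hQ.lieAlg.sq_mem q hq))
      (fun p hp q hq => by
        rw [sOE p hp q hq]; exact tmul_mem_left (hP.lieAlg.sq_mem p hp) (mQ1 q hq q hq))
      (fun u hu v hv h h' => by
        rw [sadd]; exact add_mem (add_mem h h') (Boo u hu v hv)) hu
  have sjac : ∀ u ∈ part evP odQ odP evQ, ∀ w, B (T u u) w = B u (B u w) := fun u hu w =>
    part_induction (motive := fun u => B (T u u) w = B u (B u w)) (by simp)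
      (fun p hp q hq => by
        rw [sEO p hp q hq, hB]
        exact sq_jacobi_tmul_left uP uQ (aQ q hq) (hQ.lieAlg.sq_jacobi q hq) w)
      (fun p hp q hq => by
        rw [sOE p hp q hq, hB]
        exact sq_jacobi_tmul_right uP uQ (aP p hp) (hP.lieAlg.sq_jacobi p hp) w)
      (fun u _ v _ h h' => by
        rw [sadd]
        simp only [map_add, LinearMap.add_apply, h, h', uT.jacobi]
        abel) hu
  have smulT : ∀ u ∈ part evP evQ odP odQ, ∀ v ∈ part evP odQ odP evQ,
      T (M u v) (M u v) = M (M u u) (T v v) + M (M u v) (B u v) := by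
    -- For fixed `u` both sides have the same polarization in `v`.
    have inner : ∀ u : P ⊗[K] Q, (∀ p ∈ evP, ∀ q ∈ odQ, T (M u (p ⊗ₜ q)) (M u (p ⊗ₜ q)) =
        M (M u u) (T (p ⊗ₜ q) (p ⊗ₜ q)) + M (M u (p ⊗ₜ q)) (B u (p ⊗ₜ q))) →
        (∀ p ∈ odP, ∀ q ∈ evQ, T (M u (p ⊗ₜ q)) (M u (p ⊗ₜ q)) =
        M (M u u) (T (p ⊗ₜ q) (p ⊗ₜ q)) + M (M u (p ⊗ₜ q)) (B u (p ⊗ₜ q))) →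
        ∀ v ∈ part evP odQ odP evQ,
          T (M u v) (M u v) = M (M u u) (T v v) + M (M u v) (B u v) := fun u h₁ h₂ v hv =>
      part_induction (motive := fun v => T (M u v) (M u v) =
        M (M u u) (T v v) + M (M u v) (B u v)) (by simp) h₁ h₂
        (fun v _ v' _ h h' => by
          have e := uT.br_mul_mul u v u v'
          rw [uT.alt, uT.symm v u, map_zero, add_zero] at e
          rw [map_add, sadd, h, h', e, sadd]
          simp only [map_add, LinearMap.add_apply]
          abel) hv
    intro u hu v hv
    refine part_induction (motive := fun u => ∀ v ∈ part evP odQ odP evQ,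
      T (M u v) (M u v) = M (M u u) (T v v) + M (M u v) (B u v)) (by simp)
      (fun a ha b hb => inner _ (fun c hc d hd => ?_) (fun c hc d hd => ?_))
      (fun a ha b hb => inner _ (fun c hc d hd => ?_) (fun c hc d hd => ?_))
      (fun u _ u' _ h h' v hv => ?_) hu v hv
    · have hs : sqQ (mulQ b d) = mulQ (mulQ b b) (sqQ d) + mulQ (mulQ b d) (brQ b d) :=
        hQ.sq_mul b hb d hd
      rw [Mt, sEO _ (mP1 a ha c hc) _ (mQ2 b hb d hd), sEO c hc d hd, hs, Mt, Mt, Bt, map_add, Mt,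
        Mt, aQ _ (mQ2 b hb d hd), uP.mul_self_mul, TensorProduct.tmul_add, TensorProduct.tmul_zero,
        zero_add]
    · have hs : sqP (mulP a c) = mulP (mulP a a) (sqP c) + mulP (mulP a c) (brP a c) :=
        hP.sq_mul a ha c hc
      rw [Mt, sOE _ (mP2 a ha c hc) _ (mQ1 b hb d hd), sOE c hc d hd, hs, Mt, Mt, Bt, map_add, Mt,
        Mt, aP _ (mP2 a ha c hc), uQ.mul_self_mul, TensorProduct.add_tmul, TensorProduct.zero_tmul,
        add_zero]
    · rw [Mt, sOE _ (mP3 a ha c hc) _ (mQ4 b hb d hd), Mt, Bt, map_add, Mt, Mt,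
        aP _ (mP3 a ha c hc), aP a ha, uQ.mul_self_mul, aQ b hb]
      simp
    · rw [Mt, sEO _ (mP4 a ha c hc) _ (mQ3 b hb d hd), Mt, Bt, map_add, Mt, Mt,
        aQ _ (mQ3 b hb d hd), aP a ha, uP.mul_self_mul, aP a ha]
      simp
    -- Additivity in `u`: in the polarization the terms with `v²` and `{v, v}` vanish.
    · have e := uT.br_mul_mul u v u' v
      rw [uT.alt, map_zero, Mod v hv, map_zero, LinearMap.zero_apply, add_zero, zero_add,
        uT.symm v u'] at e
      have e' : M (u + u') (u + u') = M u u + M u' u' := by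
        simp only [map_add, LinearMap.add_apply, uT.comm u' u]
        have := add_self_of_char_two K (M u u')
        linear_combination (norm := abel) this
      rw [map_add, LinearMap.add_apply, sadd, h v hv, h' v hv, e, ← map_add, e']
      simp only [map_add, LinearMap.add_apply]
      abel
  subst hM hB
  exact ⟨fun u => T u u, sEO, sOE, fun u v _ _ => sadd u v,
    { commAlg :=
        { compl := hcompl
          add_left := fun u v w => by simp
          smul_left := fun k u v => by simp
          comm := uT.comm
          assoc := uT.assoc
          alt_od := Mod
          grade_ee := Mee
          grade_eo := Meo
          grade_oo := Moo }
      lieAlg :=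
        { compl := hcompl
          add_left := LinearMap.map_add₂ (tensorOp brP mulQ + tensorOp mulP brQ)
          smul_left := LinearMap.map_smul₂ (tensorOp brP mulQ + tensorOp mulP brQ)
          symm := uT.symm
          alt_ev := fun u _ => uT.alt u
          grade_ee := Bee
          grade_eo := Beo
          grade_oo := Boo
          jacobi_ev := fun u _ v _ w => uT.jacobi u v w
          sq_mem := smem
          sq_smul := fun k u _ => by simp [mul_smul]
          sq_add := fun u _ v _ => sadd u v
          sq_jacobi := sjac }
      leibniz := uT.leibniz
      sq_mul := smulT }⟩
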